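/- Conversely, suppose φ : [-1,1] → ℂ is twice continuously differentiable, not identically zero, satisfies (U(z) − c)·φ″(z) − U″(z)·φ(z) = 0 for all z ∈ [-1,1], and φ(−1) = φ(1) = 0. Then ∫_{−1}^{1} (U(z) − c)^{−2} dz = 0. -/

import Mathlib

/-!
Since `u = U - c` and `φ` both satisfy `u φ″ = u″ φ`, their Wronskian `W` is constant and
`(φ / u)′ = W / u²`. Integrating from `-1`, where `φ` vanishes, gives `φ(z) = u(z) W ∫_{-1}^z u⁻²`.
As `φ` is not identically zero, `W ≠ 0`; as `u(1) ≠ 0`, the condition `φ(1) = 0` then says that the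
integral over `[-1, 1]` vanishes.
-/

open Set

noncomputable section

/-- Derivative within the interval `[-1,1]` (for functions on `[-1,1]`). -/
noncomputable def dI (f : ℝ → ℂ) : ℝ → ℂ := fun z => derivWithin f (Set.Icc (-1:ℝ) 1) z

/-- Second derivative of `U` within `[-1,1]`. -/
noncomputable def ddU (U : ℝ → ℝ) : ℝ → ℝ :=
  fun z => derivWithin (fun z' => derivWithin U (Set.Icc (-1:ℝ) 1) z') (Set.Icc (-1:ℝ) 1) z

/-- The first homogeneous solution `φ₁(z) = U(z) - c` of the Rayleigh equation. -/
noncomputable def rayPhi1 (U : ℝ → ℝ) (c : ℂ) : ℝ → ℂ := fun z => (U z : ℂ) - c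

/-- The second homogeneous solution `φ₂(z) = (U(z) - c)·∫_{-1}^{z} (U(z') - c)⁻² dz'`. -/
noncomputable def rayPhi2 (U : ℝ → ℝ) (c : ℂ) : ℝ → ℂ :=
  fun z => ((U z : ℂ) - c) * ∫ t in (-1:ℝ)..z, (((U t : ℂ) - c) ^ 2)⁻¹

section Calculus

lemma hasDerivWithinAt_derivWithin_of_contDiffOn_two {𝕜 E : Type*} [NontriviallyNormedField 𝕜]
    [NormedAddCommGroup E] [NormedSpace 𝕜 E] {f : 𝕜 → E} {s : Set 𝕜} (hf : ContDiffOn 𝕜 2 f s)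
    (hs : UniqueDiffOn 𝕜 s) {z : 𝕜} (hz : z ∈ s) :
    HasDerivWithinAt (derivWithin f s) (derivWithin (derivWithin f s) s z) s z := by
  have hf' : ContDiffOn 𝕜 1 (derivWithin f s) s := hf.derivWithin hs (by norm_num)
  exact (hf'.differentiableOn one_ne_zero z hz).hasDerivWithinAt

lemma eq_of_hasDerivWithinAt_zero {𝕜 E : Type*} [RCLike 𝕜] [NormedAddCommGroup E]
    [NormedSpace 𝕜 E] {f : 𝕜 → E} {s : Set 𝕜} (hs : Convex ℝ s)
    (hf : ∀ z ∈ s, HasDerivWithinAt f 0 s z) {x y : 𝕜} (hx : x ∈ s) (hy : y ∈ s) : f y = f x := by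
  have h : ‖f y - f x‖ ≤ 0 * ‖y - x‖ :=
    hs.norm_image_sub_le_of_norm_hasDerivWithin_le hf (fun _ _ => norm_zero.le) hx hy
  rwa [zero_mul, norm_le_zero_iff, sub_eq_zero] at h

lemma hasDerivWithinAt_integral_Icc {E : Type*} [NormedAddCommGroup E] [NormedSpace ℝ E]
    [CompleteSpace E] {f : ℝ → E} {a b x₀ z : ℝ} (hf : ContinuousOn f (Icc a b))
    (hx₀ : x₀ ∈ Icc a b) (hz : z ∈ Icc a b) :
    HasDerivWithinAt (fun y => ∫ t in x₀..y, f t) (f z) (Icc a b) z := by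
  have : Fact (z ∈ Icc a b) := ⟨hz⟩
  exact intervalIntegral.integral_hasDerivWithinAt_right
    (hf.mono (uIcc_subset_Icc hx₀ hz)).intervalIntegrable
    (hf.stronglyMeasurableAtFilter_nhdsWithin measurableSet_Icc z) (hf z hz)

end Calculus

section Wronskian

variable {𝕜 E : Type*} [RCLike 𝕜] [NormedAddCommGroup E] [NormedSpace 𝕜 E]

/-- The Wronskian `u v' - u' v` of a scalar function `u` and a vector-valued function `v`. The
derivatives `u'` and `v'` are arguments, so that one-sided derivatives at endpoints can be used. -/
def wronskian (u u' : ℝ → 𝕜) (v v' : ℝ → E) (z : ℝ) : E :=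
  u z • v' z - u' z • v z

variable [NormedSpace ℝ E] [IsScalarTower ℝ 𝕜 E] {u u' u'' : ℝ → 𝕜} {v v' v'' : ℝ → E}

lemma hasDerivWithinAt_wronskian {s : Set ℝ} {z : ℝ}
    (hu : HasDerivWithinAt u (u' z) s z) (hu' : HasDerivWithinAt u' (u'' z) s z)
    (hv : HasDerivWithinAt v (v' z) s z) (hv' : HasDerivWithinAt v' (v'' z) s z) :
    HasDerivWithinAt (wronskian u u' v v') (u z • v'' z - u'' z • v z) s z :=
  ((hu.smul hv').sub (hu'.smul hv)).congr_deriv (by abel)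

lemma wronskian_eq_of_smul_eq_smul {s : Set ℝ} (hs : Convex ℝ s)
    (hu : ∀ z ∈ s, HasDerivWithinAt u (u' z) s z) (hu' : ∀ z ∈ s, HasDerivWithinAt u' (u'' z) s z)
    (hv : ∀ z ∈ s, HasDerivWithinAt v (v' z) s z) (hv' : ∀ z ∈ s, HasDerivWithinAt v' (v'' z) s z)
    (huv : ∀ z ∈ s, u z • v'' z = u'' z • v z) {x y : ℝ} (hx : x ∈ s) (hy : y ∈ s) :
    wronskian u u' v v' y = wronskian u u' v v' x :=
  eq_of_hasDerivWithinAt_zero hs (fun z hz =>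
    (hasDerivWithinAt_wronskian (hu z hz) (hu' z hz) (hv z hz) (hv' z hz)).congr_deriv
      (sub_eq_zero.2 (huv z hz))) hx hy

lemma hasDerivWithinAt_inv_smul {s : Set ℝ} {z : ℝ} (hu : HasDerivWithinAt u (u' z) s z)
    (hv : HasDerivWithinAt v (v' z) s z) (hz : u z ≠ 0) :
    HasDerivWithinAt (fun x => (u x)⁻¹ • v x) ((u z ^ 2)⁻¹ • wronskian u u' v v' z) s z := by
  refine ((hu.fun_inv hz).fun_smul hv).congr_deriv ?_
  have hinv : (u z)⁻¹ = (u z ^ 2)⁻¹ * u z := by field_simp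
  rw [wronskian, hinv, smul_sub, smul_smul, smul_smul, neg_div, neg_smul, div_eq_inv_mul,
    sub_eq_add_neg]

/-- Reduction of order; the hypothesis `huv` says that `u` and `v` solve the same
equation `y″ = q y`, where `q = u″ / u`. -/
theorem eq_smul_add_integral_smul_wronskian {a b x₀ z : ℝ}
    (hu : ∀ z ∈ Icc a b, HasDerivWithinAt u (u' z) (Icc a b) z)
    (hu' : ∀ z ∈ Icc a b, HasDerivWithinAt u' (u'' z) (Icc a b) z)
    (hv : ∀ z ∈ Icc a b, HasDerivWithinAt v (v' z) (Icc a b) z)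
    (hv' : ∀ z ∈ Icc a b, HasDerivWithinAt v' (v'' z) (Icc a b) z)
    (huv : ∀ z ∈ Icc a b, u z • v'' z = u'' z • v z) (hu₀ : ∀ z ∈ Icc a b, u z ≠ 0)
    (hx₀ : x₀ ∈ Icc a b) (hz : z ∈ Icc a b) :
    v z = u z • ((u x₀)⁻¹ • v x₀ + (∫ t in x₀..z, (u t ^ 2)⁻¹) • wronskian u u' v v' x₀) := by
  set W := wronskian u u' v v' x₀
  have hcont : ContinuousOn (fun t => (u t ^ 2)⁻¹) (Icc a b) :=
    ContinuousOn.inv₀ (ContinuousOn.pow (fun t ht => (hu t ht).continuousWithinAt) 2)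
      fun t ht => pow_ne_zero 2 (hu₀ t ht)
  have hderiv : ∀ y ∈ Icc a b, HasDerivWithinAt
      (fun y => (u y)⁻¹ • v y - (∫ t in x₀..y, (u t ^ 2)⁻¹) • W) 0 (Icc a b) y := fun y hy => by
    have hW : wronskian u u' v v' y = W :=
      wronskian_eq_of_smul_eq_smul (convex_Icc a b) hu hu' hv hv' huv hx₀ hy
    refine ((hasDerivWithinAt_inv_smul (hu y hy) (hv y hy) (hu₀ y hy)).sub
      ((hasDerivWithinAt_integral_Icc hcont hx₀ hy).smul_const W)).congr_deriv ?_
    rw [hW, sub_self]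
  have hquot : (u z)⁻¹ • v z - (∫ t in x₀..z, (u t ^ 2)⁻¹) • W = (u x₀)⁻¹ • v x₀ := by
    simpa using eq_of_hasDerivWithinAt_zero (convex_Icc a b) hderiv hx₀ hz
  rw [← hquot, sub_add_cancel, smul_inv_smul₀ (hu₀ z hz)]

theorem dispersion_of_rayleigh_eigenfunction_general {a b : ℝ} {U U' U'' : ℝ → 𝕜}
    {φ φ' φ'' : ℝ → E} {c : 𝕜}
    (hU : ∀ z ∈ Icc a b, HasDerivWithinAt U (U' z) (Icc a b) z)
    (hU' : ∀ z ∈ Icc a b, HasDerivWithinAt U' (U'' z) (Icc a b) z)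
    (hc : ∀ z ∈ Icc a b, U z ≠ c)
    (hφ : ∀ z ∈ Icc a b, HasDerivWithinAt φ (φ' z) (Icc a b) z)
    (hφ' : ∀ z ∈ Icc a b, HasDerivWithinAt φ' (φ'' z) (Icc a b) z)
    (hφ0 : ∃ z ∈ Icc a b, φ z ≠ 0)
    (hray : ∀ z ∈ Icc a b, (U z - c) • φ'' z - U'' z • φ z = 0)
    (hφa : φ a = 0) (hφb : φ b = 0) :
    ∫ z in a..b, ((U z - c) ^ 2)⁻¹ = 0 := by
  obtain ⟨z, hz, hφz⟩ := hφ0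
  have hab : a ≤ b := hz.1.trans hz.2
  have hne : ∀ y ∈ Icc a b, U y - c ≠ 0 := fun y hy => sub_ne_zero.2 (hc y hy)
  set W := wronskian (fun y => U y - c) U' φ φ' a
  have hrepr : ∀ y ∈ Icc a b, φ y = (U y - c) • (∫ t in a..y, ((U t - c) ^ 2)⁻¹) • W :=
    fun y hy => by
      simpa [hφa] using eq_smul_add_integral_smul_wronskian (fun x hx => (hU x hx).sub_const c)
        hU' hφ hφ' (fun x hx => sub_eq_zero.1 (hray x hx)) hne (left_mem_Icc.2 hab) hy
  have hW : W ≠ 0 := fun hW => hφz (by rw [hrepr z hz, hW, smul_zero, smul_zero])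
  have hb : b ∈ Icc a b := right_mem_Icc.2 hab
  have hzero : (U b - c) • (∫ t in a..b, ((U t - c) ^ 2)⁻¹) • W = 0 := (hrepr b hb).symm.trans hφb
  simpa only [smul_eq_zero, hne b hb, hW, false_or, or_false] using hzero

end Wronskian

/-- Conversely, if `φ : [-1,1] → ℂ` is `C²`, not identically zero, satisfies the Rayleigh
equation `(U(z) - c)·φ″(z) - U″(z)·φ(z) = 0` on `[-1,1]` and `φ(±1) = 0`, then
`∫_{-1}^{1} (U(z) - c)⁻² dz = 0`. -/
theorem dispersion_of_rayleigh_eigenfunction (U : ℝ → ℝ)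
    (hU : ContDiffOn ℝ 2 U (Set.Icc (-1) 1)) (c : ℂ) (hc : c.im ≠ 0)
    (φ : ℝ → ℂ) (hφ : ContDiffOn ℝ 2 φ (Set.Icc (-1) 1))
    (hφ0 : ∃ z ∈ Set.Icc (-1:ℝ) 1, φ z ≠ 0)
    (hray : ∀ z ∈ Set.Icc (-1:ℝ) 1,
      ((U z : ℂ) - c) * dI (dI φ) z - (ddU U z : ℂ) * φ z = 0)
    (hbc1 : φ (-1) = 0) (hbc2 : φ 1 = 0) :
    (∫ z in (-1:ℝ)..1, (((U z : ℂ) - c) ^ 2)⁻¹) = 0 := by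
  have hs : UniqueDiffOn ℝ (Icc (-1 : ℝ) 1) := uniqueDiffOn_Icc (by norm_num)
  exact dispersion_of_rayleigh_eigenfunction_general
    (fun z hz => (hU.differentiableOn two_ne_zero z hz).hasDerivWithinAt.ofReal_comp)
    (fun z hz => (hasDerivWithinAt_derivWithin_of_contDiffOn_two hU hs hz).ofReal_comp)
    (fun z _ h => hc (by simp [← h]))
    (fun z hz => (hφ.differentiableOn two_ne_zero z hz).hasDerivWithinAt)
    (fun z hz => hasDerivWithinAt_derivWithin_of_contDiffOn_two hφ hs hz) hφ0 hray hbc1 hbc2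

end
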